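/- arXiv:2502.05939 — 4 statements merged into one kernel-verified Lean document; each statement's English description precedes it below -/
import Mathlib

section
/- Every finite poset of width at most two on n elements is isomorphic to a permutation poset: if P is a finite poset with n elements in which every antichain has at most two elements, then there exists σ ∈ S_n such that P is order-isomorphic to P_σ. -/
theorem exists_equiv_fin_of_rel {α : Type*} [Fintype α] {n : ℕ} (hcard : Fintype.card α = n)
    (r : α → α → Prop) (hr : ∀ a, r a a) (ht : ∀ a b c, r a b → r b c → r a c)
    (ha : ∀ a b, r a b → r b a → a = b) (htot : ∀ a b, r a b ∨ r b a) :
    ∃ e : α ≃ Fin n, ∀ a b, e a ≤ e b ↔ r a b := by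
  classical
  letI : LinearOrder α :=
    { le := r
      le_refl := hr
      le_trans := ht
      le_antisymm := ha
      le_total := htot
      toDecidableLE := Classical.decRel _ }
  let e := (Fintype.orderIsoFinOfCardEq α hcard).symm
  exact ⟨e.toEquiv, fun a b => e.le_iff_le⟩

theorem exists_equiv_fin_of_chains {α : Type*} [Fintype α] [PartialOrder α] {n : ℕ}
    (hcard : Fintype.card α = n) (c : α → Prop)
    (hc : ∀ a b, (c a ↔ c b) → a ≤ b ∨ b ≤ a) :
    ∃ e : α ≃ Fin n, ∀ a b, e a ≤ e b ↔ (a ≤ b ∨ (¬ b ≤ a ∧ c a ∧ ¬ c b)) := by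
  refine exists_equiv_fin_of_rel hcard _ (fun a => Or.inl le_rfl) ?_ ?_ ?_
  · intro x y z h1 h2
    have t1 := @le_trans α _ x y z
    have t2 := @le_trans α _ z x y
    have t3 := @le_trans α _ y z x
    have := hc x z
    tauto
  · intro x y h1 h2
    have := @le_antisymm α _ x y
    tauto
  · intro x y
    have := hc x y
    tauto

/-- Dilworth's theorem for width two, on finite subsets. -/
theorem exists_two_chains {α : Type*} [PartialOrder α]
    (hw : ∀ a b c : α, a ≤ b ∨ b ≤ a ∨ a ≤ c ∨ c ≤ a ∨ b ≤ c ∨ c ≤ b) (s : Finset α) :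
    ∃ f : α → Prop, ∀ a ∈ s, ∀ b ∈ s, (f a ↔ f b) → a ≤ b ∨ b ≤ a := by
  classical
  induction hn : s.card generalizing s with
  | zero =>
    rw [Finset.card_eq_zero] at hn
    subst hn
    exact ⟨fun _ => True, by simp⟩
  | succ k ih =>
    have hne : s.Nonempty := Finset.card_pos.mp (by omega)
    obtain ⟨m, hms, hmax⟩ := s.exists_maximal hne
    obtain ⟨f, hf⟩ := ih (s.erase m) (by rw [Finset.card_erase_of_mem hms]; omega)
    have key : ∀ g : α → Prop,
        (∀ a ∈ s.erase m, ∀ b ∈ s.erase m, (g a ↔ g b) → a ≤ b ∨ b ≤ a) →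
        ∀ x, x ≤ m → (∀ u ∈ s.erase m, g u → (∃ v ∈ s.erase m, ¬ u ≤ v ∧ ¬ v ≤ u) → u ≤ x) →
        ∃ f : α → Prop, ∀ a ∈ s, ∀ b ∈ s, (f a ↔ f b) → a ≤ b ∨ b ≤ a := by
      intro g hg x hxm hx
      refine ⟨fun z => z = m ∨ (g z ∧ z ≤ x), ?_⟩
      intro a ha b hb hab
      by_cases ham : a = m
      · subst ham
        have : b = a ∨ (g b ∧ b ≤ x) := hab.mp (Or.inl rfl)
        rcases this with rfl | h
        · exact Or.inl le_rfl
        · exact Or.inr (h.2.trans hxm)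
      by_cases hbm : b = m
      · subst hbm
        have : a = b ∨ (g a ∧ a ≤ x) := hab.mpr (Or.inl rfl)
        rcases this with rfl | h
        · exact Or.inl le_rfl
        · exact Or.inl (h.2.trans hxm)
      have ha' : a ∈ s.erase m := Finset.mem_erase.mpr ⟨ham, ha⟩
      have hb' : b ∈ s.erase m := Finset.mem_erase.mpr ⟨hbm, hb⟩
      by_contra hcon
      push Not at hcon
      have h1 := hg a ha' b hb'
      have h2 := fun h => hx a ha' h ⟨b, hb', hcon⟩
      have h3 := fun h => hx b hb' h ⟨a, ha', hcon.symm⟩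
      tauto
    -- top element of an incomparable part of a colour class
    have top : ∀ g : α → Prop,
        (∀ a ∈ s.erase m, ∀ b ∈ s.erase m, (g a ↔ g b) → a ≤ b ∨ b ≤ a) →
        (∃ u ∈ s.erase m, g u ∧ ∃ v ∈ s.erase m, ¬ u ≤ v ∧ ¬ v ≤ u) →
        ∃ x ∈ s.erase m, g x ∧ (∃ v ∈ s.erase m, ¬ x ≤ v ∧ ¬ v ≤ x) ∧
          ∀ u ∈ s.erase m, g u → (∃ v ∈ s.erase m, ¬ u ≤ v ∧ ¬ v ≤ u) → u ≤ x := by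
      intro g hg ⟨u, hu, hgu, hv⟩
      obtain ⟨x, hx, hxmax⟩ := ((s.erase m).filter
        (fun u => g u ∧ ∃ v ∈ s.erase m, ¬ u ≤ v ∧ ¬ v ≤ u)).exists_maximal
        ⟨u, Finset.mem_filter.mpr ⟨hu, hgu, hv⟩⟩
      rw [Finset.mem_filter] at hx
      refine ⟨x, hx.1, hx.2.1, hx.2.2, fun w hw hgw hwv => ?_⟩
      rcases hg w hw x hx.1 ⟨fun _ => hx.2.1, fun _ => hgw⟩ with h | h
      · exact h
      · exact hxmax (Finset.mem_filter.mpr ⟨hw, hgw, hwv⟩) h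
    have hf' : ∀ a ∈ s.erase m, ∀ b ∈ s.erase m, (¬ f a ↔ ¬ f b) → a ≤ b ∨ b ≤ a :=
      fun a ha b hb h => hf a ha b hb (not_iff_not.mp h)
    by_cases h1 : ∃ u ∈ s.erase m, f u ∧ ∃ v ∈ s.erase m, ¬ u ≤ v ∧ ¬ v ≤ u
    · have h2 : ∃ u ∈ s.erase m, ¬ f u ∧ ∃ v ∈ s.erase m, ¬ u ≤ v ∧ ¬ v ≤ u := by
        obtain ⟨u, hu, hfu, v, hv, huv⟩ := h1
        refine ⟨v, hv, fun h => ?_, u, hu, huv.symm⟩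
        have := hf u hu v hv
        tauto
      obtain ⟨x, hx, hfx, ⟨q, hq, hxq⟩, hxtop⟩ := top f hf h1
      obtain ⟨y, hy, hfy, ⟨p, hp, hyp⟩, hytop⟩ := top _ hf' h2
      have hqf : ¬ f q := fun h => by
        have := hf x hx q hq
        tauto
      have hpf : f p := by
        by_contra h
        have := hf y hy p hp
        tauto
      have hqy := hytop q hq hqf ⟨x, hx, hxq.symm⟩
      have hpx := hxtop p hp hpf ⟨y, hy, hyp.symm⟩
      have hxm : ¬ m ≤ x := fun h =>
        (Finset.mem_erase.mp hx).1 (le_antisymm (hmax (Finset.mem_erase.mp hx).2 h) h)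
      have hym : ¬ m ≤ y := fun h =>
        (Finset.mem_erase.mp hy).1 (le_antisymm (hmax (Finset.mem_erase.mp hy).2 h) h)
      rcases hw x y m with h | h | h | h | h | h
      · exact absurd (hpx.trans h) hyp.2
      · exact absurd (hqy.trans h) hxq.2
      · exact key f hf x h hxtop
      · exact absurd h hxm
      · exact key _ hf' y h hytop
      · exact absurd h hym
    · exact key f hf m le_rfl fun u hu hfu hv => absurd ⟨u, hu, hfu, hv⟩ h1

/-- Every finite poset of width at most two on `n` elements is isomorphic to a permutation
poset: if every antichain of `P` has at most two elements, then there is `σ ∈ S_n` and a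
bijection `e` from `P` to `[n]` such that `a ≤ b` in `P` iff `e a ≤ e b` and
`σ (e a) ≤ σ (e b)` (i.e. `P ≅ P_σ`). -/
theorem width_two_poset_is_permutation_poset (n : ℕ) (α : Type*) [Fintype α]
    [PartialOrder α] (hcard : Fintype.card α = n)
    (hwidth : ∀ A : Finset α, IsAntichain (· ≤ ·) (A : Set α) → A.card ≤ 2) :
    ∃ (σ : Equiv.Perm (Fin n)) (e : α ≃ Fin n),
      ∀ a b : α, a ≤ b ↔ (e a ≤ e b ∧ σ (e a) ≤ σ (e b)) := by
  classical
  have hw : ∀ a b c : α, a ≤ b ∨ b ≤ a ∨ a ≤ c ∨ c ≤ a ∨ b ≤ c ∨ c ≤ b := by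
    intro a b c
    by_contra! hcon
    obtain ⟨h1, h2, h3, h4, h5, h6⟩ := hcon
    have hab : a ≠ b := fun h => h1 h.le
    have hac : a ≠ c := fun h => h3 h.le
    have hbc : b ≠ c := fun h => h5 h.le
    have := hwidth {a, b, c} (by
      intro x hx y hy hxy
      simp only [Finset.coe_insert, Finset.coe_singleton, Set.mem_insert_iff,
        Set.mem_singleton_iff] at hx hy
      rcases hx with rfl | rfl | rfl <;> rcases hy with rfl | rfl | rfl <;>
        first
        | exact absurd rfl hxy
        | assumption)
    rw [Finset.card_eq_three.mpr ⟨a, b, c, hab, hac, hbc, rfl⟩] at this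
    omega
  obtain ⟨f, hf⟩ := exists_two_chains hw Finset.univ
  obtain ⟨e₁, h₁⟩ := exists_equiv_fin_of_chains hcard f
    (fun a b h => hf a (Finset.mem_univ a) b (Finset.mem_univ b) h)
  obtain ⟨e₂, h₂⟩ := exists_equiv_fin_of_chains hcard (fun a => ¬ f a)
    (fun a b h => hf a (Finset.mem_univ a) b (Finset.mem_univ b) (not_iff_not.mp h))
  refine ⟨e₁.symm.trans e₂, e₁, fun a b => ?_⟩
  simp only [Equiv.trans_apply, Equiv.symm_apply_apply, h₁, h₂]
  tauto
end

section
/- For the permutation π = [2, 4, 6, 8, 10, 1, 12, 3, 15, 5, 17, 7, 9, 11, 13, 14, 16] ∈ S_17, the descent-generating polynomial of the lower weak-order interval, Q^{π}_W(t) = Σ_{σ ≤_W π} t^{des(σ)}, equals 3t⁸ + 86t⁷ + 658t⁶ + 1946t⁵ + 2534t⁴ + 1420t³ + 336t² + 32t + 1, and this polynomial is not real-rooted. In particular, there exists π ∈ S_17 whose lower weak-order interval has a non-real-rooted descent-generating polynomial. -/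
open Polynomial

/-- One covering step in the (right) weak order: `τ` is obtained from `σ` by swapping the
adjacent entries `σ_i < σ_{i+1}` in one-line notation. -/
def WeakStep {n : ℕ} (σ τ : Equiv.Perm (Fin n)) : Prop :=
  ∃ (i : Fin n) (h : (i : ℕ) + 1 < n),
    σ i < σ ⟨(i : ℕ) + 1, h⟩ ∧ τ = σ * Equiv.swap i ⟨(i : ℕ) + 1, h⟩

/-- The weak order on `S_n`: the partial order generated by the cover relations
given by `WeakStep`. -/
def WeakLE {n : ℕ} (σ π : Equiv.Perm (Fin n)) : Prop :=
  Relation.ReflTransGen WeakStep σ π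

/-- The number of descents of a permutation: indices `i` with `σ_i > σ_{i+1}`. -/
def desCount {n : ℕ} (σ : Equiv.Perm (Fin n)) : ℕ :=
  (Finset.univ.filter fun i : Fin n =>
    ∃ h : (i : ℕ) + 1 < n, σ ⟨(i : ℕ) + 1, h⟩ < σ i).card

open scoped Classical in
/-- The descent-generating polynomial `Q^π_W(t) = Σ_{σ ≤_W π} t^{des(σ)}` of the lower
weak-order interval `[id, π]_W`. -/
noncomputable def weakDesPoly {n : ℕ} (π : Equiv.Perm (Fin n)) : Polynomial ℝ :=
  ∑ σ : Equiv.Perm (Fin n), if WeakLE σ π then X ^ desCount σ else 0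

/-- A real polynomial is real-rooted if it is nonzero and all of its complex roots are real. -/
def RealRooted (p : Polynomial ℝ) : Prop :=
  p ≠ 0 ∧ ∀ z : ℂ, Polynomial.aeval z p = 0 → z.im = 0

/-- The permutation `π = [2, 4, 6, 8, 10, 1, 12, 3, 15, 5, 17, 7, 9, 11, 13, 14, 16] ∈ S_17`
(in 0-based form). -/
noncomputable def pi17 : Equiv.Perm (Fin 17) :=
  Equiv.ofBijective ![1, 3, 5, 7, 9, 0, 11, 2, 14, 4, 16, 6, 8, 10, 12, 13, 15] (by decide)

namespace Pi17

/-! ### Weak order via inversions -/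

def Good {n : ℕ} (π σ : Equiv.Perm (Fin n)) : Prop :=
  ∀ i j : Fin n, i < j → σ i < σ j ∨ π.symm (σ i) < π.symm (σ j)

lemma swap_lt {n : ℕ} (k : Fin n) (h : (k : ℕ) + 1 < n) (i j : Fin n) (hij : i < j)
    (hne : ¬ (i = k ∧ j = ⟨(k : ℕ) + 1, h⟩)) :
    Equiv.swap k ⟨(k : ℕ) + 1, h⟩ i < Equiv.swap k ⟨(k : ℕ) + 1, h⟩ j := by
  simp only [Equiv.swap_apply_def]
  rw [Fin.lt_def] at hij
  simp only [Fin.ext_iff] at hne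
  rw [Fin.lt_def]
  split_ifs with h1 h2 h3 h4 h5 h6 <;> simp only [Fin.ext_iff] at * <;> omega

lemma good_of_step {n : ℕ} {π σ τ : Equiv.Perm (Fin n)} (hs : WeakStep σ τ) (hg : Good π τ) :
    Good π σ := by
  obtain ⟨k, h, hlt, rfl⟩ := hs
  intro i j hij
  by_cases hne : i = k ∧ j = ⟨(k : ℕ) + 1, h⟩
  · left
    rw [hne.1, hne.2]
    exact hlt
  · have := hg _ _ (swap_lt k h i j hij hne)
    simpa using this

lemma good_of_weakLE {n : ℕ} {π σ : Equiv.Perm (Fin n)} (h : WeakLE σ π) : Good π σ := by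
  unfold WeakLE at h
  induction h using Relation.ReflTransGen.head_induction_on with
  | refl => intro i j hij; right; simpa using hij
  | head h1 _ ih => exact good_of_step h1 ih

lemma perm_eq_of_strictMono {n : ℕ} (g : Equiv.Perm (Fin n)) (hg : StrictMono g) : g = 1 := by
  have : (hg.orderIsoOfSurjective g g.surjective) = OrderIso.refl (Fin n) := Subsingleton.elim _ _
  ext i
  have h2 := congrArg (fun e : Fin n ≃o Fin n => e i) this
  simpa using congrArg Fin.val h2

lemma weakLE_of_good {n : ℕ} (π : Equiv.Perm (Fin (n + 1))) :
    ∀ (f : Lex (Fin (n + 1) → Fin (n + 1))) (σ : Equiv.Perm (Fin (n + 1))),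
      f = toLex (fun i => π.symm (σ i)) → Good π σ → WeakLE σ π := by
  intro f
  induction f using WellFoundedLT.induction with
  | ind f ih =>
  intro σ hf hg
  by_cases hm : ∀ i : Fin n, (σ.trans π.symm) i.castSucc < (σ.trans π.symm) i.succ
  · have h1 := perm_eq_of_strictMono (σ.trans π.symm) (Fin.strictMono_iff_lt_succ.2 hm)
    have : σ = π := by
      ext i
      have := congrArg (fun e : Equiv.Perm (Fin (n + 1)) => e i) h1
      simp only [Equiv.trans_apply, Equiv.Perm.one_apply] at this
      rw [Equiv.symm_apply_eq] at this
      rw [this]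
    rw [this]
    exact Relation.ReflTransGen.refl
  · push Not at hm
    obtain ⟨k, hk⟩ := hm
    have hlt : π.symm (σ k.succ) < π.symm (σ k.castSucc) := by
      refine lt_of_le_of_ne hk ?_
      intro h
      have := σ.injective (π.symm.injective h)
      exact absurd this (Fin.castSucc_lt_succ).ne'
    have hσ : σ k.castSucc < σ k.succ := by
      rcases hg _ _ (Fin.castSucc_lt_succ (i := k)) with h | h
      · exact h
      · exact absurd hlt h.not_gt
    have hk1 : ((k.castSucc : Fin (n + 1)) : ℕ) + 1 < n + 1 := by simp
    have hks : (⟨((k.castSucc : Fin (n + 1)) : ℕ) + 1, hk1⟩ : Fin (n + 1)) = k.succ := by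
      ext; simp
    have hstep : WeakStep σ (σ * Equiv.swap k.castSucc k.succ) :=
      ⟨k.castSucc, hk1, by rw [hks]; exact hσ, by rw [hks]⟩
    refine Relation.ReflTransGen.head hstep (ih _ ?_ (σ * Equiv.swap k.castSucc k.succ) rfl ?_)
    · rw [hf]
      refine ⟨k.castSucc, ?_, ?_⟩
      · intro j hj
        have h1 : j ≠ k.castSucc := hj.ne
        have h2 : j ≠ k.succ := (hj.trans Fin.castSucc_lt_succ).ne
        simp [Equiv.swap_apply_of_ne_of_ne h1 h2]
      · simpa using hlt
    · intro i j hij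
      by_cases hne : i = k.castSucc ∧ j = k.succ
      · right
        rw [hne.1, hne.2]
        simpa using hlt
      · have := swap_lt k.castSucc hk1 i j hij (by rw [hks]; exact hne)
        rw [hks] at this
        exact hg _ _ this

lemma weakLE_iff {n : ℕ} (π σ : Equiv.Perm (Fin (n + 1))) : WeakLE σ π ↔ Good π σ :=
  ⟨good_of_weakLE, weakLE_of_good π _ σ rfl⟩

/-! ### Enumerating the interval as shuffles of two chains -/

def posv (x : Fin 17) : ℕ := [5, 0, 7, 1, 9, 2, 11, 3, 12, 4, 13, 6, 14, 15, 8, 16, 10].getD x.val 0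

lemma posv_eq (x : Fin 17) : posv x = (pi17.symm x : ℕ) := by
  have h : ∀ y : Fin 17, posv (pi17 y) = y := by
    intro y
    change posv (![1, 3, 5, 7, 9, 0, 11, 2, 14, 4, 16, 6, 8, 10, 12, 13, 15] y) = y
    revert y
    decide
  simpa using h (pi17.symm x)

def okb (x y : Fin 17) : Bool := Nat.blt x.val y.val || Nat.blt (posv x) (posv y)

def R (x y : Fin 17) : Prop := x.val < y.val ∧ posv x < posv y

instance : DecidableRel R := fun _ _ => inferInstanceAs (Decidable (_ ∧ _))

lemma okb_iff (x y : Fin 17) : okb x y = true ↔ x.val < y.val ∨ posv x < posv y := by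
  simp [okb]

def okHead (a : Fin 17) : List (Fin 17) → Bool
  | [] => true
  | b :: _ => okb a b

def br {β : Type} (f : Fin 17 → List (Fin 17) → List β) : List (Fin 17) → List β
  | [] => []
  | a :: A => f a A

def gen : ℕ → List (Fin 17) → List (Fin 17) → List (List (Fin 17))
  | 0, _, _ => [[]]
  | k + 1, A, B =>
    br (fun a A' => bif okHead a B then (gen k A' B).map (a :: ·) else []) A ++
    br (fun b B' => bif okHead b A then (gen k A B').map (b :: ·) else []) B

lemma okHead_iff (a : Fin 17) (B : List (Fin 17)) (hB : B.Pairwise R) :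
    okHead a B = true ↔ ∀ b ∈ B, okb a b = true := by
  cases B with
  | nil => simp [okHead]
  | cons b B =>
    simp only [okHead, List.mem_cons, forall_eq_or_imp]
    refine ⟨fun h => ⟨h, fun c hc => ?_⟩, fun h => h.1⟩
    have := (List.pairwise_cons.1 hB).1 c hc
    rw [okb_iff] at *
    unfold R at this
    omega

lemma R_ok {x y : Fin 17} (h : R x y) : okb x y = true := by
  rw [okb_iff]; exact Or.inl h.1

lemma R_not_ok {x y : Fin 17} (h : R x y) : ¬ okb y x = true := by
  rw [okb_iff]; unfold R at h; omega

lemma mem_gen : ∀ (k : ℕ) (A B l : List (Fin 17)), A.length + B.length = k →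
    A.Pairwise R → B.Pairwise R →
    (l ∈ gen k A B ↔ l.Perm (A ++ B) ∧ l.Pairwise (fun x y => okb x y = true)) := by
  intro k
  induction k with
  | zero =>
    intro A B l hl _ _
    have h1 : A = [] := List.length_eq_zero_iff.1 (by omega)
    have h2 : B = [] := List.length_eq_zero_iff.1 (by omega)
    subst h1 h2
    simp only [gen, List.mem_singleton, List.append_nil, List.perm_nil]
    constructor
    · rintro rfl; simp
    · exact fun h => h.1
  | succ k ih =>
    intro A B l hl hA hB
    have hmemA : l ∈ br (fun a A' => bif okHead a B then (gen k A' B).map (a :: ·) else []) A ↔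
      ∃ a A' l', A = a :: A' ∧ l = a :: l' ∧ (∀ b ∈ B, okb a b = true) ∧
        l'.Perm (A' ++ B) ∧ l'.Pairwise (fun x y => okb x y = true) := by
      cases A with
      | nil => simp [br]
      | cons a A' =>
        have ih' := fun l' => ih A' B l' (by simp at hl; omega) (List.pairwise_cons.1 hA).2 hB
        have ho := okHead_iff a B hB
        cases hh : okHead a B with
        | false =>
          have : ¬ ∀ b ∈ B, okb a b = true := by rw [← ho, hh]; simp
          simp only [br, hh, cond_false, List.not_mem_nil, false_iff]
          rintro ⟨a', A'', l', h1, h2, h3, -⟩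
          cases h1
          exact this h3
        | true =>
          have := ho.1 hh
          simp only [br, hh, cond_true, List.mem_map, ih']
          constructor
          · rintro ⟨l', h, rfl⟩
            exact ⟨a, A', l', rfl, rfl, this, h.1, h.2⟩
          · rintro ⟨a', A'', l', h1, rfl, -, h3, h4⟩
            cases h1
            exact ⟨l', ⟨h3, h4⟩, rfl⟩
    have hmemB : l ∈ br (fun b B' => bif okHead b A then (gen k A B').map (b :: ·) else []) B ↔
      ∃ b B' l', B = b :: B' ∧ l = b :: l' ∧ (∀ a ∈ A, okb b a = true) ∧
        l'.Perm (A ++ B') ∧ l'.Pairwise (fun x y => okb x y = true) := by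
      cases B with
      | nil => simp [br]
      | cons b B' =>
        have ih' := fun l' => ih A B' l' (by simp at hl; omega) hA (List.pairwise_cons.1 hB).2
        have ho := okHead_iff b A hA
        cases hh : okHead b A with
        | false =>
          have : ¬ ∀ a ∈ A, okb b a = true := by rw [← ho, hh]; simp
          simp only [br, hh, cond_false, List.not_mem_nil, false_iff]
          rintro ⟨a', A'', l', h1, h2, h3, -⟩
          cases h1
          exact this h3
        | true =>
          have := ho.1 hh
          simp only [br, hh, cond_true, List.mem_map, ih']
          constructor
          · rintro ⟨l', h, rfl⟩
            exact ⟨b, B', l', rfl, rfl, this, h.1, h.2⟩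
          · rintro ⟨a', A'', l', h1, rfl, -, h3, h4⟩
            cases h1
            exact ⟨l', ⟨h3, h4⟩, rfl⟩
    rw [gen, List.mem_append, hmemA, hmemB]
    constructor
    · rintro (⟨a, A', l', rfl, rfl, h1, h2, h3⟩ | ⟨b, B', l', rfl, rfl, h1, h2, h3⟩)
      · refine ⟨h2.cons a, List.pairwise_cons.2 ⟨fun y hy => ?_, h3⟩⟩
        rcases List.mem_append.1 (h2.mem_iff.1 hy) with h | h
        · exact R_ok ((List.pairwise_cons.1 hA).1 y h)
        · exact h1 y h
      · refine ⟨(h2.cons b).trans List.perm_middle.symm,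
          List.pairwise_cons.2 ⟨fun y hy => ?_, h3⟩⟩
        rcases List.mem_append.1 (h2.mem_iff.1 hy) with h | h
        · exact h1 y h
        · exact R_ok ((List.pairwise_cons.1 hB).1 y h)
    · rintro ⟨hp, hw⟩
      cases l with
      | nil =>
        have := hp.length_eq
        rw [List.length_append, List.length_nil] at this
        omega
      | cons x l' =>
        obtain ⟨hx, hw'⟩ := List.pairwise_cons.1 hw
        rcases List.mem_append.1 (hp.mem_iff.1 List.mem_cons_self) with h | h
        · left
          cases A with
          | nil => simp at h
          | cons a A' =>
            have hxa : x = a := by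
              by_contra hne
              have hxA : x ∈ A' := (List.mem_cons.1 h).resolve_left hne
              have hal : a ∈ x :: l' := hp.mem_iff.2 (by simp)
              have : a ∈ l' := (List.mem_cons.1 hal).resolve_left (Ne.symm hne)
              exact R_not_ok ((List.pairwise_cons.1 hA).1 x hxA) (hx a this)
            subst hxa
            have hp' : l'.Perm (A' ++ B) := List.Perm.cons_inv hp
            exact ⟨x, A', l', rfl, rfl,
              fun b hb => hx b (hp'.mem_iff.2 (List.mem_append_right _ hb)), hp', hw'⟩
        · right
          cases B with
          | nil => simp at h
          | cons b B' =>
            have hxb : x = b := by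
              by_contra hne
              have hxB : x ∈ B' := (List.mem_cons.1 h).resolve_left hne
              have hal : b ∈ x :: l' := hp.mem_iff.2 (by simp)
              have : b ∈ l' := (List.mem_cons.1 hal).resolve_left (Ne.symm hne)
              exact R_not_ok ((List.pairwise_cons.1 hB).1 x hxB) (hx b this)
            subst hxb
            have hp' : l'.Perm (A ++ B') := List.Perm.cons_inv (hp.trans List.perm_middle)
            exact ⟨x, B', l', rfl, rfl,
              fun a ha => hx a (hp'.mem_iff.2 (List.mem_append_left _ ha)), hp', hw'⟩

lemma nodup_gen : ∀ (k : ℕ) (A B : List (Fin 17)), (A ++ B).Nodup → (gen k A B).Nodup := by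
  intro k
  induction k with
  | zero => intro A B _; simp [gen]
  | succ k ih =>
    intro A B h
    rw [gen, List.nodup_append]
    refine ⟨?_, ?_, ?_⟩
    · cases A with
      | nil => simp [br]
      | cons a A' =>
        cases hh : okHead a B with
        | false => simp [br, hh]
        | true =>
          simp only [br, hh, cond_true]
          exact (ih A' B (List.nodup_cons.1 h).2).map (List.cons_injective)
    · cases B with
      | nil => simp [br]
      | cons b B' =>
        cases hh : okHead b A with
        | false => simp [br, hh]
        | true =>
          simp only [br, hh, cond_true]
          exact (ih A B' (List.nodup_cons.1 (List.perm_middle.nodup_iff.1 h)).2).map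
            (List.cons_injective)
    · cases A with
      | nil => simp [br]
      | cons a A' =>
        cases B with
        | nil => simp [br]
        | cons b B' =>
          have hab : a ≠ b := by
            rintro rfl
            simp at h
          intro x hx y hy hxy
          subst hxy
          cases h1 : okHead a (b :: B') <;> cases h2 : okHead b (a :: A') <;>
            simp [br, h1, h2] at hx hy
          obtain ⟨l1, -, rfl⟩ := hx
          obtain ⟨l2, -, h3⟩ := hy
          simp at h3
          exact hab h3.1.symm

def desFrom : Fin 17 → List (Fin 17) → ℕ
  | _, [] => 0
  | a, x :: l => (bif Nat.blt x.val a.val then 1 else 0) + desFrom x l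

lemma desFrom_ofFn : ∀ (m : ℕ) (f : Fin (m + 1) → Fin 17),
    desFrom (f 0) (List.ofFn (fun i : Fin m => f i.succ)) =
      ∑ i : Fin m, if f i.succ < f i.castSucc then 1 else 0 := by
  intro m
  induction m with
  | zero => intro f; simp [desFrom]
  | succ m ih =>
    intro f
    rw [List.ofFn_succ, desFrom, Fin.sum_univ_succ]
    have := ih (fun i => f i.succ)
    rw [this]
    congr 1
    by_cases h : f 1 < f 0
    · have h' : (f 1).val < (f 0).val := h
      have h2 : Nat.blt (f 1).val (f 0).val = true := by rw [Nat.blt_eq]; exact h'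
      simp [h, h2]
    · have h' : ¬ (f 1).val < (f 0).val := h
      have h2 : Nat.blt (f 1).val (f 0).val = false := by
        rw [← Bool.not_eq_true, Nat.blt_eq]; exact h'
      simp [h, h2]

lemma desCount_eq (σ : Equiv.Perm (Fin 17)) : desCount σ = desFrom 0 (List.ofFn σ) := by
  unfold desCount
  rw [List.ofFn_succ, desFrom]
  have := desFrom_ofFn 16 σ
  rw [this, Finset.card_filter, Fin.sum_univ_castSucc]
  have h0 : Nat.blt (σ 0).val (0 : Fin 17).val = false := by
    rw [← Bool.not_eq_true, Nat.blt_eq]; simp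
  rw [h0]
  simp only [cond_false, zero_add]
  have hl : ¬ ∃ h : ((Fin.last 16 : Fin 17) : ℕ) + 1 < 17,
      σ ⟨((Fin.last 16 : Fin 17) : ℕ) + 1, h⟩ < σ (Fin.last 16) := by
    rintro ⟨h, -⟩
    simp at h
  rw [if_neg hl, add_zero]
  refine Finset.sum_congr rfl fun i _ => ?_
  refine if_congr ?_ rfl rfl
  constructor
  · rintro ⟨h, h'⟩; exact h'
  · intro h'
    exact ⟨Nat.succ_lt_succ i.isLt, h'⟩

/-! ### Computing the polynomial -/

def ladd : List ℕ → List ℕ → List ℕ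
  | [], l => l
  | x :: l, [] => x :: l
  | x :: l, y :: m => (x + y) :: ladd l m

noncomputable def toP : List ℕ → ℝ[X]
  | [] => 0
  | c :: l => C (c : ℝ) + X * toP l

lemma toP_ladd : ∀ l m : List ℕ, toP (ladd l m) = toP l + toP m
  | [], m => by simp [ladd, toP]
  | x :: l, [] => by simp [ladd, toP]
  | x :: l, y :: m => by
    simp only [ladd, toP, toP_ladd l m, Nat.cast_add, C_add]; ring

def W : ℕ → Fin 17 → List (Fin 17) → List (Fin 17) → List ℕ
  | 0, _, _, _ => [1]
  | k + 1, p, A, B =>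
    ladd
      (br (fun a A' => bif okHead a B then
        (bif Nat.blt a.val p.val then 0 :: W k a A' B else W k a A' B) else []) A)
      (br (fun b B' => bif okHead b A then
        (bif Nat.blt b.val p.val then 0 :: W k b A B' else W k b A B') else []) B)

lemma toP_shift (c : Bool) (x : Fin 17) (w : List ℕ) (G : List (List (Fin 17)))
    (h : toP w = (G.map fun l => (X : ℝ[X]) ^ desFrom x l).sum) (p : Fin 17) :
    toP (bif c then (bif Nat.blt x.val p.val then 0 :: w else w) else []) =
      ((bif c then G.map (x :: ·) else []).map fun l => (X : ℝ[X]) ^ desFrom p l).sum := by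
  cases c with
  | false => simp [toP]
  | true =>
    simp only [cond_true, List.map_map, Function.comp_def, desFrom]
    cases hb : Nat.blt x.val p.val with
    | false => simp [h]
    | true => simp [toP, h, pow_add, List.sum_map_mul_left]

lemma toP_W : ∀ (k : ℕ) (p : Fin 17) (A B : List (Fin 17)),
    toP (W k p A B) = ((gen k A B).map fun l => (X : ℝ[X]) ^ desFrom p l).sum := by
  intro k
  induction k with
  | zero => intro p A B; simp [W, gen, toP, desFrom]
  | succ k ih =>
    intro p A B
    rw [W, gen, toP_ladd, List.map_append, List.sum_append]
    congr 1
    · cases A with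
      | nil => simp [br, toP]
      | cons a A' => exact toP_shift _ a _ _ (ih a A' B) p
    · cases B with
      | nil => simp [br, toP]
      | cons b B' => exact toP_shift _ b _ _ (ih b A B') p

def chA : List (Fin 17) := [1, 3, 5, 7, 9, 11, 14, 16]
def chB : List (Fin 17) := [0, 2, 4, 6, 8, 10, 12, 13, 15]

lemma W_val : W 17 0 chA chB = [1, 32, 336, 1420, 2534, 1946, 658, 86, 3] := by
  decide +kernel

lemma chains_perm : (chA ++ chB).Perm (List.finRange 17) := by decide +kernel

lemma mem_gen' (l : List (Fin 17)) : l ∈ gen 17 chA chB ↔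
    l.Perm (List.finRange 17) ∧ l.Pairwise (fun x y => okb x y = true) := by
  rw [mem_gen 17 chA chB l (by decide) (by decide) (by decide)]
  constructor
  · exact fun h => ⟨h.1.trans chains_perm, h.2⟩
  · exact fun h => ⟨h.1.trans chains_perm.symm, h.2⟩

lemma good_iff (σ : Equiv.Perm (Fin 17)) : Good pi17 σ ↔ List.ofFn σ ∈ gen 17 chA chB := by
  rw [mem_gen']
  have hp : (List.ofFn σ).Perm (List.finRange 17) := by
    rw [List.perm_ext_iff_of_nodup (List.nodup_ofFn.2 σ.injective) (List.nodup_finRange 17)]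
    intro a
    simp only [List.mem_ofFn, List.mem_finRange, iff_true]
    exact σ.surjective a
  simp only [hp, true_and, List.pairwise_ofFn, okb_iff, posv_eq]
  exact Iff.rfl

lemma poly_eq : weakDesPoly pi17 = toP [1, 32, 336, 1420, 2534, 1946, 658, 86, 3] := by
  classical
  rw [← W_val, toP_W]
  have hnd : (gen 17 chA chB).Nodup :=
    nodup_gen _ _ _ (chains_perm.nodup_iff.2 (List.nodup_finRange 17))
  rw [← List.sum_toFinset _ hnd]
  unfold weakDesPoly
  rw [← Finset.sum_filter]
  refine Finset.sum_bij (fun σ _ => List.ofFn σ) ?_ ?_ ?_ ?_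
  · intro σ hσ
    have := (Finset.mem_filter.1 hσ).2
    rw [weakLE_iff, good_iff] at this
    simpa using this
  · intro σ _ τ _ h
    exact Equiv.coe_fn_injective (List.ofFn_injective h)
  · intro l hl
    have hl := List.mem_toFinset.1 hl
    obtain ⟨hp, -⟩ := (mem_gen' l).1 hl
    have hlen : l.length = 17 := by simpa using hp.length_eq
    have hn : l.Nodup := hp.nodup_iff.2 (List.nodup_finRange 17)
    have hinj : Function.Injective (fun i : Fin 17 => l.get (i.cast hlen.symm)) := by
      intro i j hij
      have := List.nodup_iff_injective_get.1 hn hij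
      simpa using this
    have hof : List.ofFn (fun i : Fin 17 => l.get (i.cast hlen.symm)) = l := by
      apply List.ext_get
      · simp [hlen]
      · intro i h1 h2; simp only [List.get_eq_getElem, List.getElem_ofFn, Fin.val_cast]
    refine ⟨Equiv.ofBijective _ (Finite.injective_iff_bijective.1 hinj), ?_, ?_⟩
    · rw [Finset.mem_filter, weakLE_iff, good_iff]
      refine ⟨Finset.mem_univ _, ?_⟩
      rw [Equiv.coe_ofBijective, hof]
      exact hl
    · rw [Equiv.coe_ofBijective, hof]
  · intro σ _
    rw [desCount_eq]

/-! ### Non-real-rootedness -/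

lemma norm_eval_ge (p : ℝ[X]) (hp : RealRooted p) (z : ℂ) :
    ‖aeval ((z.re : ℝ) : ℂ) p‖ ≤ ‖aeval z p‖ := by
  have hs := IsAlgClosed.splits (p.map (algebraMap ℝ ℂ))
  have key : ∀ w : ℂ, ‖aeval w p‖ = ‖(p.map (algebraMap ℝ ℂ)).leadingCoeff‖ *
      ((p.map (algebraMap ℝ ℂ)).roots.map fun r => ‖w - r‖).prod := by
    intro w
    rw [← eval_map_algebraMap]
    conv_lhs => rw [hs.eq_prod_roots]
    rw [eval_mul, eval_C, norm_mul, eval_multiset_prod, Multiset.map_map]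
    congr 1
    have hh := map_multiset_prod (normHom : ℂ →*₀ ℝ)
      (Multiset.map (eval w ∘ fun x => X - C x) (map (algebraMap ℝ ℂ) p).roots)
    rw [Multiset.map_map] at hh
    simpa [Function.comp_def] using hh
  rw [key, key]
  refine mul_le_mul_of_nonneg_left ?_ (norm_nonneg _)
  refine Multiset.prod_map_le_prod_map₀ _ _ (fun _ _ => norm_nonneg _) ?_
  intro r hr
  have hr0 : aeval r p = 0 := by
    rw [← eval_map_algebraMap]
    exact (mem_roots'.1 hr).2
  have him := hp.2 r hr0
  have h1 : ((z.re : ℝ) : ℂ) - r = (((z - r).re : ℝ) : ℂ) := by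
    apply Complex.ext <;> simp [him]
  rw [h1, Complex.norm_real]
  exact Complex.abs_re_le_norm _

lemma not_rr : ¬ RealRooted (C 3 * X ^ 8 + C 86 * X ^ 7 + C 658 * X ^ 6 + C 1946 * X ^ 5 +
        C 2534 * X ^ 4 + C 1420 * X ^ 3 + C 336 * X ^ 2 + C 32 * X + 1) := by
  intro h
  have := norm_eval_ge _ h ⟨-11 / 6, 1 / 6⟩
  rw [← sq_le_sq₀ (norm_nonneg _) (norm_nonneg _), Complex.sq_norm, Complex.sq_norm] at this
  simp [Complex.normSq_apply, pow_succ] at this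
  norm_num at this

end Pi17

/-- For `π = [2, 4, 6, 8, 10, 1, 12, 3, 15, 5, 17, 7, 9, 11, 13, 14, 16] ∈ S_17`, the
descent-generating polynomial of the lower weak-order interval equals
`3t⁸ + 86t⁷ + 658t⁶ + 1946t⁵ + 2534t⁴ + 1420t³ + 336t² + 32t + 1`, which is not
real-rooted. In particular, some `π ∈ S_17` has a non-real-rooted lower weak-order
descent-generating polynomial. -/
theorem weakDesPoly_pi17 :
    weakDesPoly pi17 =
      C 3 * X ^ 8 + C 86 * X ^ 7 + C 658 * X ^ 6 + C 1946 * X ^ 5 + C 2534 * X ^ 4 +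
        C 1420 * X ^ 3 + C 336 * X ^ 2 + C 32 * X + 1 ∧
    ¬ RealRooted (C 3 * X ^ 8 + C 86 * X ^ 7 + C 658 * X ^ 6 + C 1946 * X ^ 5 +
        C 2534 * X ^ 4 + C 1420 * X ^ 3 + C 336 * X ^ 2 + C 32 * X + 1) ∧
    ∃ π : Equiv.Perm (Fin 17), ¬ RealRooted (weakDesPoly π) := by
  have hp : weakDesPoly pi17 =
      C 3 * X ^ 8 + C 86 * X ^ 7 + C 658 * X ^ 6 + C 1946 * X ^ 5 + C 2534 * X ^ 4 +
        C 1420 * X ^ 3 + C 336 * X ^ 2 + C 32 * X + 1 := by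
    rw [Pi17.poly_eq]
    simp only [Pi17.toP, Nat.cast_ofNat, Nat.cast_one, C_1]
    ring
  refine ⟨hp, Pi17.not_rr, pi17, ?_⟩
  rw [hp]
  exact Pi17.not_rr
end

section
/- For the permutation π = [4, 1, 5, 6, 8, 2, 3, 7] ∈ S_8, the excedance-generating polynomial of the lower Bruhat interval, Σ_{σ ≤_B π} t^{exc(σ)}, equals 1 + 21t + 140t² + 290t³ + 127t⁴ + 5t⁵, and this polynomial is not real-rooted (it has non-real complex roots). -/
open Polynomial

/-- The number of inversions of a permutation: pairs of positions `i < j` with `σ i > σ j`. -/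
def invCount {n : ℕ} (σ : Equiv.Perm (Fin n)) : ℕ :=
  (Finset.univ.filter fun p : Fin n × Fin n => p.1 < p.2 ∧ σ p.2 < σ p.1).card

/-- One step in the Bruhat order: `τ` is obtained from `σ` by swapping two (not
necessarily adjacent) entries in one-line notation, strictly increasing the number
of inversions. -/
def BruhatStep {n : ℕ} (σ τ : Equiv.Perm (Fin n)) : Prop :=
  (∃ i j : Fin n, i ≠ j ∧ τ = σ * Equiv.swap i j) ∧ invCount σ < invCount τ

/-- The Bruhat order: `σ ≤_B π` iff there is a chain from `σ` to `π` of swaps, each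
strictly increasing the number of inversions. -/
def BruhatLE {n : ℕ} (σ π : Equiv.Perm (Fin n)) : Prop :=
  Relation.ReflTransGen BruhatStep σ π

/-- The number of excedances of a permutation: positions `i` with `σ_i > i`. -/
def excCount {n : ℕ} (σ : Equiv.Perm (Fin n)) : ℕ :=
  (Finset.univ.filter fun i : Fin n => i < σ i).card

open scoped Classical in
/-- The excedance-generating polynomial `Σ_{σ ≤_B π} t^{exc(σ)}` of the lower Bruhat
interval `[id, π]_B`. -/
noncomputable def bruhatExcPoly {n : ℕ} (π : Equiv.Perm (Fin n)) : Polynomial ℝ :=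
  ∑ σ : Equiv.Perm (Fin n), if BruhatLE σ π then X ^ excCount σ else 0

/-- The permutation `π = [4, 1, 5, 6, 8, 2, 3, 7] ∈ S_8` (in 0-based form). -/
noncomputable def pi8 : Equiv.Perm (Fin 8) :=
  Equiv.ofBijective ![3, 0, 4, 5, 7, 1, 2, 6] (by decide)

namespace Pi8

theorem blt_iff {a b : ℕ} : Nat.blt a b = true ↔ a < b := by rw [Nat.blt_eq]

/-- Binary search trees of natural numbers. -/
inductive T where
  | e : T
  | n : T → ℕ → T → T

namespace T

def mem : T → ℕ → Bool
  | e, _ => false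
  | n l v r, c => bif Nat.blt c v then mem l c else bif Nat.beq c v then true else mem r c

def all (p : ℕ → Bool) : T → Bool
  | e => true
  | n l v r => p v && (all p l && all p r)

def Has : T → ℕ → Prop
  | e, _ => False
  | n l v r, c => c = v ∨ Has l c ∨ Has r c

/-- Number of entries of the tree satisfying `p`. -/
def cnt (p : ℕ → Bool) : T → ℕ
  | e => 0
  | n l v r => (bif p v then 1 else 0) + (cnt p l + cnt p r)

def fs : T → Finset ℕ
  | e => ∅
  | n l v r => insert v (fs l ∪ fs r)

/-- All entries lie in `[a, b)` and the tree is ordered. -/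
def bst : T → ℕ → ℕ → Bool
  | e, _, _ => true
  | n l v r, a, b => (Nat.ble a v && Nat.blt v b) && (bst l a v && bst r (v+1) b)

theorem all_spec {p : ℕ → Bool} {t : T} (h : t.all p = true) {c : ℕ} (hc : t.Has c) :
    p c = true := by
  induction t with
  | e => exact hc.elim
  | n l v r ihl ihr =>
    simp only [all, Bool.and_eq_true] at h
    rcases hc with rfl | hc | hc
    · exact h.1
    · exact ihl h.2.1 hc
    · exact ihr h.2.2 hc

theorem mem_has {t : T} {c : ℕ} (h : t.mem c = true) : t.Has c := by
  induction t with
  | e => simp [mem] at h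
  | n l v r ihl ihr =>
    simp only [mem] at h
    cases h1 : Nat.blt c v with
    | true => rw [h1] at h; exact Or.inr (Or.inl (ihl h))
    | false =>
      rw [h1] at h
      cases h2 : Nat.beq c v with
      | true => exact Or.inl (Nat.eq_of_beq_eq_true h2)
      | false => rw [h2] at h; exact Or.inr (Or.inr (ihr h))

theorem mem_fs {t : T} {c : ℕ} : c ∈ t.fs ↔ t.Has c := by
  induction t with
  | e => simp [fs, Has]
  | n l v r ihl ihr => simp [fs, Has, ihl, ihr]

theorem bst_bound {t : T} {a b : ℕ} (h : t.bst a b = true) {c : ℕ} (hc : t.Has c) :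
    a ≤ c ∧ c < b := by
  induction t generalizing a b with
  | e => exact hc.elim
  | n l v r ihl ihr =>
    simp only [bst, Bool.and_eq_true, Nat.ble_eq, Nat.blt_eq] at h
    obtain ⟨⟨h1, h2⟩, h3, h4⟩ := h
    rcases hc with rfl | hc | hc
    · exact ⟨h1, h2⟩
    · have := ihl h3 hc; omega
    · have := ihr h4 hc; omega

theorem cnt_spec {p : ℕ → Bool} {t : T} {a b : ℕ} (h : t.bst a b = true) :
    (t.fs.filter fun c => p c = true).card = t.cnt p := by
  induction t generalizing a b with
  | e => simp [fs, cnt]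
  | n l v r ihl ihr =>
    simp only [bst, Bool.and_eq_true, Nat.ble_eq, Nat.blt_eq] at h
    obtain ⟨⟨h1, h2⟩, h3, h4⟩ := h
    have hd : Disjoint l.fs r.fs := by
      rw [Finset.disjoint_left]
      intro x hx hy
      have := bst_bound h3 (mem_fs.1 hx)
      have := bst_bound h4 (mem_fs.1 hy)
      omega
    have hv : v ∉ l.fs ∪ r.fs := by
      intro hx
      rcases Finset.mem_union.1 hx with hx | hx
      · have := bst_bound h3 (mem_fs.1 hx); omega
      · have := bst_bound h4 (mem_fs.1 hx); omega
    have hU : ((l.fs ∪ r.fs).filter fun c => p c = true).card = cnt p l + cnt p r := by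
      rw [Finset.filter_union, Finset.card_union_of_disjoint, ihl h3, ihr h4]
      exact Finset.disjoint_filter_filter hd
    rw [fs, cnt, Finset.filter_insert]
    cases hp : p v with
    | true =>
      rw [if_pos rfl, Finset.card_insert_of_notMem, hU]
      · simp [add_comm]
      · intro hh; exact hv (Finset.mem_filter.1 hh).1
    | false => simp [hU]

end T

open T in
/-- The lower interval, with `σ` encoded as the number with base 8 digits `σ i`. -/
def tree : T :=
  (n (n (n (n (n (n (n (n (n (n e 13171459 e) 13171480 e) 13236993 (n e 13237000 e)) 13269571 (n
  (n (n e 13269592 e) 13269697 e) 13269704 (n e 13300483 e))) 13300504 (n (n (n (n e 13301505 e)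
  13301512 e) 13301827 (n e 13301848 e)) 13301953 (n (n e 13301960 e) 13343491 (n e 13343512 e))))
  13351681 (n (n (n (n (n e 13351688 e) 13355587 e) 13355608 (n e 13355713 e)) 13355720 (n (n e
  13357827 e) 13357848 (n e 13358849 e))) 13358856 (n (n (n (n e 13359171 e) 13359192 e) 13359297
  (n e 13359304 e)) 13433602 (n (n e 13433616 e) 13466369 (n e 13466376 e))))) 13531714 (n (n (n
  (n (n (n e 13531728 e) 13531777 e) 13531784 (n e 13562626 e)) 13562640 (n (n (n e 13563137 e)
  13563144 e) 13563970 (n e 13563984 e))) 13564033 (n (n (n (n e 13564040 e) 13605634 e) 13605648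
  (n e 13609729 e)) 13609736 (n (n e 13617730 e) 13617744 (n e 13617793 e)))) 13617800 (n (n (n (n
  (n e 13619970 e) 13619984 e) 13620481 (n e 13620488 e)) 13621314 (n (n e 13621328 e) 13621377 (n
  e 13621384 e))) 13695619 (n (n (n (n e 13695640 e) 13695682 e) 13695696 (n e 13728323 e))
  13728344 (n (n e 13728449 e) 13728456 (n e 13761090 e)))))) 13761104 (n (n (n (n (n (n (n e
  13761153 e) 13761160 e) 13824643 (n e 13824664 e)) 13824706 (n (n (n e 13824720 e) 13825091 e)
  13825112 (n e 13825217 e))) 13825224 (n (n (n (n e 13825602 e) 13825616 e) 13825665 (n e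
  13825672 e)) 13867651 (n (n e 13867672 e) 13867714 (n e 13867728 e)))) 13871683 (n (n (n (n (n e
  13871704 e) 13871809 e) 13871816 (n e 13875778 e)) 13875792 (n (n e 13875841 e) 13875848 (n e
  13881987 e))) 13882008 (n (n (n (n e 13882050 e) 13882064 e) 13882435 (n e 13882456 e)) 13882561
  (n (n e 13882568 e) 13882946 (n e 13882960 e))))) 13883009 (n (n (n (n (n (n e 13883016 e)
  13956355 e) 13956376 (n e 13956866 e)) 13956880 (n (n e 13957251 e) 13957272 (n e 13957314 e)))
  13957328 (n (n (n (n e 13988611 e) 13988632 e) 13989633 (n e 13989640 e)) 13989955 (n (n e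
  13989976 e) 13990081 (n e 13990088 e)))) 14021378 (n (n (n (n (n e 14021392 e) 14021889 e)
  14021896 (n e 14022722 e)) 14022736 (n (n e 14022785 e) 14022792 (n e 14054019 e))) 14054040 (n
  (n (n (n e 14054082 e) 14054096 e) 14054467 (n e 14054488 e)) 14054593 (n (n e 14054600 e)
  14054978 (n e 14054992 e))))))) 14055041 (n (n (n (n (n (n (n (n e 14055048 e) 14128387 e)
  14128408 (n e 14128898 e)) 14128912 (n (n (n e 14129283 e) 14129304 e) 14129346 (n e 14129360
  e))) 14131971 (n (n (n (n e 14131992 e) 14132993 e) 14133000 (n e 14133315 e)) 14133336 (n (n e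
  14133441 e) 14133448 (n e 14136066 e)))) 14136080 (n (n (n (n (n e 14136577 e) 14136584 e)
  14137410 (n e 14137424 e)) 14137473 (n (n e 14137480 e) 14140035 (n e 14140056 e))) 14140098 (n
  (n (n (n e 14140112 e) 14140483 e) 14140504 (n e 14140609 e)) 14140616 (n (n e 14140994 e)
  14141008 (n e 14141057 e))))) 14141064 (n (n (n (n (n (n e 14461699 e) 14461720 e) 14465794 (n e
  14465808 e)) 14469763 (n (n e 14469784 e) 14469826 (n e 14469840 e))) 14472451 (n (n (n (n e
  14472472 e) 14472962 e) 14472976 (n e 14473347 e)) 14473368 (n (n e 14473410 e) 14473424 (n e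
  14490371 e)))) 14490392 (n (n (n (n (n e 14498561 e) 14498568 e) 14502467 (n e 14502488 e))
  14502593 (n (n e 14502600 e) 14504707 (n e 14504728 e))) 14505729 (n (n (n (n e 14505736 e)
  14506051 e) 14506072 (n e 14506177 e)) 14506184 (n (n e 14523138 e) 14523152 (n e 14527233
  e)))))) 14527240 (n (n (n (n (n (n (n e 14535234 e) 14535248 e) 14535297 (n e 14535304 e))
  14537474 (n (n (n e 14537488 e) 14537985 e) 14537992 (n e 14538818 e))) 14538832 (n (n (n (n e
  14538881 e) 14538888 e) 14555779 (n e 14555800 e)) 14555842 (n (n e 14555856 e) 14559811 (n e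
  14559832 e)))) 14559937 (n (n (n (n (n e 14559944 e) 14563906 e) 14563920 (n e 14563969 e))
  14563976 (n (n e 14570115 e) 14570136 (n e 14570178 e))) 14570192 (n (n (n (n e 14570563 e)
  14570584 e) 14570689 (n e 14570696 e)) 14571074 (n (n e 14571088 e) 14571137 (n e 14571144
  e))))) 14587139 (n (n (n (n (n (n e 14587160 e) 14587650 e) 14587664 (n e 14588035 e)) 14588056
  (n (n e 14588098 e) 14588112 (n e 14590723 e))) 14590744 (n (n (n (n e 14591745 e) 14591752 e)
  14592067 (n e 14592088 e)) 14592193 (n (n e 14592200 e) 14594818 (n e 14594832 e)))) 14595329 (n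
  (n (n (n (n e 14595336 e) 14596162 e) 14596176 (n e 14596225 e)) 14596232 (n (n e 14598787 e)
  14598808 (n e 14598850 e))) 14598864 (n (n (n (n e 14599235 e) 14599256 e) 14599361 (n e
  14599368 e)) 14599746 (n (n e 14599760 e) 14599809 (n e 14599816 e)))))))) 15264515 (n (n (n (n
  (n (n (n (n (n e 15264536 e) 15330049 e) 15330056 (n e 15362627 e)) 15362648 (n (n (n e 15362753
  e) 15362760 e) 15393539 (n e 15393560 e))) 15394561 (n (n (n (n e 15394568 e) 15394883 e)
  15394904 (n e 15395009 e)) 15395016 (n (n e 15407875 e) 15407896 (n e 15416065 e)))) 15416072 (n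
  (n (n (n (n e 15419971 e) 15419992 e) 15420097 (n e 15420104 e)) 15422211 (n (n e 15422232 e)
  15423233 (n e 15423240 e))) 15423555 (n (n (n (n e 15423576 e) 15423681 e) 15423688 (n e
  15526658 e)) 15526672 (n (n e 15559425 e) 15559432 (n e 15624770 e))))) 15624784 (n (n (n (n (n
  (n e 15624833 e) 15624840 e) 15655682 (n e 15655696 e)) 15656193 (n (n e 15656200 e) 15657026 (n
  e 15657040 e))) 15657089 (n (n (n (n e 15657096 e) 15670018 e) 15670032 (n e 15674113 e))
  15674120 (n (n e 15682114 e) 15682128 (n e 15682177 e)))) 15682184 (n (n (n (n (n e 15684354 e)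
  15684368 e) 15684865 (n e 15684872 e)) 15685698 (n (n e 15685712 e) 15685761 (n e 15685768 e)))
  15788675 (n (n (n (n e 15788696 e) 15788738 e) 15788752 (n e 15821379 e)) 15821400 (n (n e
  15821505 e) 15821512 (n e 15854146 e)))))) 15854160 (n (n (n (n (n (n (n e 15854209 e) 15854216
  e) 15917699 (n e 15917720 e)) 15917762 (n (n (n e 15917776 e) 15918147 e) 15918168 (n e 15918273
  e))) 15918280 (n (n (n (n e 15918658 e) 15918672 e) 15918721 (n e 15918728 e)) 15932035 (n (n e
  15932056 e) 15932098 (n e 15932112 e)))) 15936067 (n (n (n (n (n e 15936088 e) 15936193 e)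
  15936200 (n e 15940162 e)) 15940176 (n (n e 15940225 e) 15940232 (n e 15946371 e))) 15946392 (n
  (n (n (n e 15946434 e) 15946448 e) 15946819 (n e 15946840 e)) 15946945 (n (n e 15946952 e)
  15947330 (n e 15947344 e))))) 15947393 (n (n (n (n (n (n e 15947400 e) 16049411 e) 16049432 (n e
  16049922 e)) 16049936 (n (n e 16050307 e) 16050328 (n e 16050370 e))) 16050384 (n (n (n (n e
  16081667 e) 16081688 e) 16082689 (n e 16082696 e)) 16083011 (n (n e 16083032 e) 16083137 (n e
  16083144 e)))) 16114434 (n (n (n (n (n e 16114448 e) 16114945 e) 16114952 (n e 16115778 e))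
  16115792 (n (n e 16115841 e) 16115848 (n e 16147075 e))) 16147096 (n (n (n (n e 16147138 e)
  16147152 e) 16147523 (n e 16147544 e)) 16147649 (n (n e 16147656 e) 16148034 (n e 16148048
  e))))))) 16148097 (n (n (n (n (n (n (n (n e 16148104 e) 16192771 e) 16192792 (n e 16193282 e))
  16193296 (n (n (n e 16193667 e) 16193688 e) 16193730 (n e 16193744 e))) 16196355 (n (n (n (n e
  16196376 e) 16197377 e) 16197384 (n e 16197699 e)) 16197720 (n (n e 16197825 e) 16197832 (n e
  16200450 e)))) 16200464 (n (n (n (n (n e 16200961 e) 16200968 e) 16201794 (n e 16201808 e))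
  16201857 (n (n e 16201864 e) 16204419 (n e 16204440 e))) 16204482 (n (n (n (n e 16204496 e)
  16204867 e) 16204888 (n e 16204993 e)) 16205000 (n (n e 16205378 e) 16205392 (n e 16205441
  e))))) 16205448 (n (n (n (n (n (n e 16296707 e) 16296728 e) 16300802 (n e 16300816 e)) 16304771
  (n (n e 16304792 e) 16304834 (n e 16304848 e))) 16307459 (n (n (n (n e 16307480 e) 16307970 e)
  16307984 (n e 16308355 e)) 16308376 (n (n e 16308418 e) 16308432 (n e 16325379 e)))) 16325400 (n
  (n (n (n (n e 16333569 e) 16333576 e) 16337475 (n e 16337496 e)) 16337601 (n (n e 16337608 e)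
  16339715 (n e 16339736 e))) 16340737 (n (n (n (n e 16340744 e) 16341059 e) 16341080 (n e
  16341185 e)) 16341192 (n (n e 16358146 e) 16358160 (n e 16362241 e)))))) 16362248 (n (n (n (n (n
  (n (n e 16370242 e) 16370256 e) 16370305 (n e 16370312 e)) 16372482 (n (n (n e 16372496 e)
  16372993 e) 16373000 (n e 16373826 e))) 16373840 (n (n (n (n e 16373889 e) 16373896 e) 16390787
  (n e 16390808 e)) 16390850 (n (n e 16390864 e) 16394819 (n e 16394840 e)))) 16394945 (n (n (n (n
  (n e 16394952 e) 16398914 e) 16398928 (n e 16398977 e)) 16398984 (n (n e 16405123 e) 16405144 (n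
  e 16405186 e))) 16405200 (n (n (n (n e 16405571 e) 16405592 e) 16405697 (n e 16405704 e))
  16406082 (n (n e 16406096 e) 16406145 (n e 16406152 e))))) 16422147 (n (n (n (n (n (n e 16422168
  e) 16422658 e) 16422672 (n e 16423043 e)) 16423064 (n (n e 16423106 e) 16423120 (n e 16425731
  e))) 16425752 (n (n (n (n e 16426753 e) 16426760 e) 16427075 (n e 16427096 e)) 16427201 (n (n e
  16427208 e) 16429826 (n e 16429840 e)))) 16430337 (n (n (n (n (n e 16430344 e) 16431170 e)
  16431184 (n e 16431233 e)) 16431240 (n (n e 16433795 e) 16433816 (n e 16433858 e))) 16433872 (n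
  (n (n (n e 16434243 e) 16434264 e) 16434369 (n e 16434376 e)) 16434754 (n (n e 16434768 e)
  16434817 (n e 16434824 e)))))))))

def dig (c i : ℕ) : ℕ := c / 8 ^ i % 8

def pairs : List (ℕ × ℕ) :=
  [(0,1),(0,2),(0,3),(0,4),(0,5),(0,6),(0,7),(1,2),(1,3),(1,4),(1,5),(1,6),(1,7),
   (2,3),(2,4),(2,5),(2,6),(2,7),(3,4),(3,5),(3,6),(3,7),(4,5),(4,6),(4,7),(5,6),(5,7),(6,7)]

/-- Swap the digits in positions `i < j`. -/
def sw (c i j : ℕ) : ℕ :=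
  (c + dig c j * 8 ^ i + dig c i * 8 ^ j) - (dig c i * 8 ^ i + dig c j * 8 ^ j)

def downOK (c : ℕ) : Bool :=
  pairs.all fun q => bif Nat.blt (dig c q.2) (dig c q.1) then tree.mem (sw c q.1 q.2) else true

def piCode : ℕ := 3 + 0*8 + 4*8^2 + 5*8^3 + 7*8^4 + 1*8^5 + 2*8^6 + 6*8^7

def upOK (c : ℕ) : Bool :=
  Nat.beq c piCode || pairs.any fun q =>
    Nat.blt (dig (sw c q.1 q.2) q.2) (dig (sw c q.1 q.2) q.1) && (Nat.blt (sw c q.1 q.2) c &&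
      (Nat.beq (sw (sw c q.1 q.2) q.1 q.2) c && tree.mem (sw c q.1 q.2)))

def boolNat (b : Bool) : ℕ := bif b then 1 else 0

def exc (c : ℕ) : ℕ :=
  boolNat (Nat.blt 0 (dig c 0)) + boolNat (Nat.blt 1 (dig c 1)) + boolNat (Nat.blt 2 (dig c 2)) +
  boolNat (Nat.blt 3 (dig c 3)) + boolNat (Nat.blt 4 (dig c 4)) + boolNat (Nat.blt 5 (dig c 5)) +
  boolNat (Nat.blt 6 (dig c 6)) + boolNat (Nat.blt 7 (dig c 7))

theorem tree_down : tree.all downOK = true := by decide +kernel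
theorem tree_up : tree.all upOK = true := by decide +kernel
theorem tree_pi : tree.mem piCode = true := by decide +kernel
theorem tree_bst : tree.bst 0 (8^8) = true := by decide +kernel
theorem tree_exc : tree.all (fun c => Nat.blt (exc c) 6) = true := by decide +kernel
theorem tree_cnt0 : tree.cnt (fun c => Nat.beq (exc c) 0) = 1 := by decide +kernel
theorem tree_cnt1 : tree.cnt (fun c => Nat.beq (exc c) 1) = 21 := by decide +kernel
theorem tree_cnt2 : tree.cnt (fun c => Nat.beq (exc c) 2) = 140 := by decide +kernel
theorem tree_cnt3 : tree.cnt (fun c => Nat.beq (exc c) 3) = 290 := by decide +kernel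
theorem tree_cnt4 : tree.cnt (fun c => Nat.beq (exc c) 4) = 127 := by decide +kernel
theorem tree_cnt5 : tree.cnt (fun c => Nat.beq (exc c) 5) = 5 := by decide +kernel

theorem pairs_mem : ∀ i j : Fin 8, i < j → ((i : ℕ), (j : ℕ)) ∈ pairs := by decide

theorem pairs_lt : ∀ q ∈ pairs, q.1 < q.2 ∧ q.2 < 8 := by decide

def code (σ : Equiv.Perm (Fin 8)) : ℕ := ∑ i : Fin 8, (σ i : ℕ) * 8 ^ (i : ℕ)

theorem dig_code (σ : Equiv.Perm (Fin 8)) (i : Fin 8) : dig (code σ) i = σ i := by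
  have h0 := (σ 0).isLt
  have h1 := (σ 1).isLt
  have h2 := (σ 2).isLt
  have h3 := (σ 3).isLt
  have h4 := (σ 4).isLt
  have h5 := (σ 5).isLt
  have h6 := (σ 6).isLt
  have h7 := (σ 7).isLt
  have hc : code σ = (σ 0 : ℕ) + σ 1 * 8 + σ 2 * 64 + σ 3 * 512 + σ 4 * 4096 + σ 5 * 32768
      + σ 6 * 262144 + σ 7 * 2097152 := by
    simp [code, Fin.sum_univ_eight]
  rw [hc, dig]
  fin_cases i <;> simp <;> omega

theorem code_inj : Function.Injective code := by
  intro σ τ h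
  ext i
  rw [← dig_code, ← dig_code, h]

theorem code_swap (σ : Equiv.Perm (Fin 8)) {i j : Fin 8} (hij : i ≠ j) :
    code (σ * Equiv.swap i j) = sw (code σ) i j := by
  have key : (code (σ * Equiv.swap i j) : ℤ) - code σ =
      ((σ j : ℤ) * 8 ^ (i : ℕ) - σ i * 8 ^ (i : ℕ)) +
      ((σ i : ℤ) * 8 ^ (j : ℕ) - σ j * 8 ^ (j : ℕ)) := by
    unfold code
    push_cast
    rw [← Finset.sum_sub_distrib, Finset.sum_eq_add i j hij]
    · simp
    · intro c _ hc
      rw [Function.comp_apply, Equiv.swap_apply_of_ne_of_ne hc.1 hc.2, sub_self]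
    · simp
    · simp
  unfold sw
  rw [dig_code, dig_code]
  zify at *
  have key2 : code (σ * Equiv.swap i j) + ((σ i : ℕ) * 8 ^ (i : ℕ) + σ j * 8 ^ (j : ℕ)) =
      code σ + σ j * 8 ^ (i : ℕ) + σ i * 8 ^ (j : ℕ) := by
    zify
    linarith
  rw [← key2]
  simp

theorem inv_lt {n : ℕ} (σ : Equiv.Perm (Fin n)) {i j : Fin n} (hij : i < j) (h : σ i < σ j) :
    invCount σ < invCount (σ * Equiv.swap i j) := by
  set s := Equiv.swap i j with hs
  have ss : ∀ a, s (s a) = a := fun a => Equiv.swap_apply_self i j a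
  have si : s i = j := Equiv.swap_apply_left i j
  have sj : s j = i := Equiv.swap_apply_right i j
  have sne : ∀ a, a ≠ i → a ≠ j → s a = a := fun a h1 h2 => Equiv.swap_apply_of_ne_of_ne h1 h2
  let f : Fin n × Fin n → Fin n × Fin n := fun p => if s p.1 < s p.2 then (s p.1, s p.2) else p
  unfold invCount
  rw [← Finset.card_image_of_injOn (f := f)]
  · apply Finset.card_lt_card
    rw [Finset.ssubset_iff_of_subset]
    · refine ⟨(i, j), ?_, ?_⟩
      · refine Finset.mem_filter.2 ⟨Finset.mem_univ _, hij, ?_⟩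
        rw [Equiv.Perm.mul_apply, Equiv.Perm.mul_apply, si, sj]; exact h
      · simp only [Finset.mem_image, Finset.mem_filter, Finset.mem_univ, true_and, not_exists,
          not_and, Prod.forall, f]
        rintro a b ⟨hab, hba⟩
        split_ifs with hc
        · intro he
          simp only [Prod.mk.injEq] at he
          have ha : a = j := by rw [← ss a, he.1, si]
          have hb : b = i := by rw [← ss b, he.2, sj]
          subst ha hb
          exact absurd hab (not_lt.2 hij.le)
        · intro he
          simp only [Prod.mk.injEq] at he
          obtain ⟨rfl, rfl⟩ := he
          exact absurd hba (not_lt.2 h.le)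
    · intro q hq
      simp only [Finset.mem_image, Finset.mem_filter, Finset.mem_univ, true_and, Prod.exists,
        f] at hq
      obtain ⟨a, b, ⟨hab, hba⟩, rfl⟩ := hq
      rw [Finset.mem_filter]
      refine ⟨Finset.mem_univ _, ?_⟩
      rw [Equiv.Perm.mul_apply, Equiv.Perm.mul_apply]
      split_ifs with hc
      · refine ⟨hc, ?_⟩
        simp only [ss]
        exact hba
      · refine ⟨hab, ?_⟩
        show σ (s b) < σ (s a)
        by_cases ai : a = i
        · subst ai
          by_cases bj : b = j
          · subst bj; exact absurd hba (not_lt.2 h.le)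
          · rw [si, sne b hab.ne' bj]; exact hba.trans h
        · by_cases aj : a = j
          · subst aj
            exfalso; apply hc
            rw [sj, sne b (hij.trans hab).ne' hab.ne']
            exact hij.trans hab
          · by_cases bj : b = j
            · subst bj; rw [sj, sne a ai aj]; exact h.trans hba
            · by_cases bi : b = i
              · subst bi
                exfalso; apply hc
                rw [si, sne a ai aj]; exact hab.trans hij
              · rw [sne a ai aj, sne b bi bj]; exact hba
  · rintro ⟨a, b⟩ hp ⟨c, d⟩ hq he
    simp only [Finset.coe_filter, Finset.mem_univ, true_and, Set.mem_ofPred_eq] at hp hq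
    simp only [f] at he
    split_ifs at he with h1 h2 h2
    · simp only [Prod.mk.injEq, EmbeddingLike.apply_eq_iff_eq] at he
      rw [he.1, he.2]
    · simp only [Prod.mk.injEq] at he
      exfalso; apply h2
      rw [← he.1, ← he.2, ss, ss]; exact hp.1
    · simp only [Prod.mk.injEq] at he
      exfalso; apply h1
      rw [he.1, he.2, ss, ss]; exact hq.1
    · exact he

/-- A Bruhat step undoes an inversion `i < j` of the larger permutation. -/
theorem step_inv {n : ℕ} {σ τ : Equiv.Perm (Fin n)} (h : BruhatStep σ τ) :
    ∃ i j : Fin n, i < j ∧ τ j < τ i ∧ σ = τ * Equiv.swap i j := by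
  obtain ⟨⟨i, j, hij, rfl⟩, hlt⟩ := h
  have main : ∀ i j : Fin n, i < j → invCount σ < invCount (σ * Equiv.swap i j) →
      ∃ i' j' : Fin n, i' < j' ∧ (σ * Equiv.swap i j) j' < (σ * Equiv.swap i j) i' ∧
        σ = σ * Equiv.swap i j * Equiv.swap i' j' := by
    intro i j hij hlt
    refine ⟨i, j, hij, ?_, by rw [mul_assoc, Equiv.swap_mul_self, mul_one]⟩
    by_contra hcon
    have hne : (σ * Equiv.swap i j) i ≠ (σ * Equiv.swap i j) j :=
      fun he => hij.ne ((σ * Equiv.swap i j).injective he)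
    have := inv_lt (σ * Equiv.swap i j) hij (lt_of_le_of_ne (not_lt.1 hcon) hne)
    rw [mul_assoc, Equiv.swap_mul_self, mul_one] at this
    omega
  rcases lt_or_gt_of_ne hij with h | h
  · exact main i j h hlt
  · rw [Equiv.swap_comm] at hlt ⊢
    exact main j i h hlt

theorem code_pi : code pi8 = piCode := by
  simp [code, pi8, Fin.sum_univ_eight, piCode]

theorem le_has {σ : Equiv.Perm (Fin 8)} (h : BruhatLE σ pi8) : tree.Has (code σ) := by
  unfold BruhatLE at h
  induction h using Relation.ReflTransGen.head_induction_on with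
  | refl => rw [code_pi]; exact T.mem_has tree_pi
  | head h' _ ih =>
    obtain ⟨i, j, hij, hlt, rfl⟩ := step_inv h'
    have hd := T.all_spec tree_down ih
    rw [downOK, List.all_eq_true] at hd
    have := hd _ (pairs_mem i j hij)
    simp only [dig_code] at this
    have hb : Nat.blt _ _ = true := blt_iff.2 (Fin.lt_def.1 hlt)
    rw [hb] at this
    rw [code_swap _ hij.ne]
    exact T.mem_has this

theorem has_le (c : ℕ) (h : tree.Has c) : ∃ σ, BruhatLE σ pi8 ∧ code σ = c := by
  induction c using Nat.strong_induction_on with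
  | _ c ih =>
    have hu := T.all_spec tree_up h
    rw [upOK, Bool.or_eq_true] at hu
    rcases hu with hu | hu
    · exact ⟨pi8, Relation.ReflTransGen.refl, by rw [code_pi, Nat.eq_of_beq_eq_true hu]⟩
    · rw [List.any_eq_true] at hu
      obtain ⟨⟨i, j⟩, hq, hu⟩ := hu
      simp only [Bool.and_eq_true, Nat.blt_eq] at hu
      obtain ⟨h1, h2, h3, h4⟩ := hu
      obtain ⟨hij, hj⟩ := pairs_lt _ hq
      simp only at hij hj
      obtain ⟨τ, hτ, hc⟩ := ih _ h2 (T.mem_has h4)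
      lift i to Fin 8 using hij.trans hj
      lift j to Fin 8 using hj
      have hij' : i < j := hij
      rw [← hc, dig_code, dig_code] at h1
      refine ⟨τ * Equiv.swap i j, ?_, ?_⟩
      · refine Relation.ReflTransGen.head ⟨⟨i, j, hij'.ne, ?_⟩, ?_⟩ hτ
        · rw [mul_assoc, Equiv.swap_mul_self, mul_one]
        · have := inv_lt (τ * Equiv.swap i j) hij' (by simpa using h1)
          rwa [mul_assoc, Equiv.swap_mul_self, mul_one] at this
      · rw [code_swap _ hij'.ne, hc]
        exact Nat.eq_of_beq_eq_true h3

theorem exc_code (σ : Equiv.Perm (Fin 8)) : exc (code σ) = excCount σ := by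
  have hb : ∀ a b : ℕ, boolNat (Nat.blt a b) = if a < b then 1 else 0 := by
    intro a b
    by_cases h : a < b
    · rw [if_pos h, blt_iff.2 h]; rfl
    · rw [if_neg h, Bool.eq_false_iff.2 (fun h' => h (blt_iff.1 h'))]; rfl
  have hx : excCount σ = ∑ i : Fin 8, if (i : ℕ) < dig (code σ) i then 1 else 0 := by
    simp only [dig_code, Fin.val_fin_lt, excCount, Finset.card_filter]
  rw [hx, Fin.sum_univ_eight]
  simp only [exc, hb]
  rfl

theorem poly_eq : bruhatExcPoly pi8 =
      1 + C 21 * X + C 140 * X ^ 2 + C 290 * X ^ 3 + C 127 * X ^ 4 + C 5 * X ^ 5 := by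
  classical
  have h1 : bruhatExcPoly pi8 = ∑ c ∈ tree.fs, (X : ℝ[X]) ^ exc c := by
    unfold bruhatExcPoly
    rw [← Finset.sum_filter]
    apply Finset.sum_bij (fun σ _ => code σ)
    · intro σ hσ
      exact T.mem_fs.2 (le_has (Finset.mem_filter.1 hσ).2)
    · intro σ _ τ _ h
      exact code_inj h
    · intro c hc
      obtain ⟨σ, h, rfl⟩ := has_le c (T.mem_fs.1 hc)
      exact ⟨σ, Finset.mem_filter.2 ⟨Finset.mem_univ _, h⟩, rfl⟩
    · intro σ _
      rw [exc_code]
  have h2 : ∑ c ∈ tree.fs, (X : ℝ[X]) ^ exc c =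
      ∑ k ∈ Finset.range 6, ∑ c ∈ tree.fs with exc c = k, (X : ℝ[X]) ^ exc c := by
    rw [Finset.sum_fiberwise_of_maps_to]
    intro c hc
    exact Finset.mem_range.2 (blt_iff.1 (T.all_spec tree_exc (T.mem_fs.1 hc)))
  have h3 : ∀ k, ∑ c ∈ tree.fs with exc c = k, (X : ℝ[X]) ^ exc c =
      C ((tree.cnt (fun c => Nat.beq (exc c) k) : ℕ) : ℝ) * X ^ k := by
    intro k
    rw [← T.cnt_spec tree_bst, Finset.sum_congr rfl (g := fun _ => (X : ℝ[X]) ^ k)]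
    · rw [Finset.sum_const, nsmul_eq_mul, ← C_eq_natCast]
      simp only [Nat.beq_eq]
    · intro c hc
      rw [(Finset.mem_filter.1 hc).2]
  rw [h1, h2, Finset.sum_congr rfl (fun k _ => h3 k)]
  simp only [Finset.sum_range_succ, Finset.sum_range_zero, tree_cnt0, tree_cnt1, tree_cnt2,
    tree_cnt3, tree_cnt4, tree_cnt5]
  simp

theorem not_rr : ¬ RealRooted (1 + C 21 * X + C 140 * X ^ 2 + C 290 * X ^ 3 + C 127 * X ^ 4 +
        C 5 * X ^ 5) := by
  rintro ⟨-, hr⟩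
  set p : ℝ[X] := 1 + C 21 * X + C 140 * X ^ 2 + C 290 * X ^ 3 + C 127 * X ^ 4 +
        C 5 * X ^ 5 with hp
  have hdeg : p.natDegree = 5 := by rw [hp]; compute_degree!
  have hlead : p.leadingCoeff = 5 := by
    rw [leadingCoeff, hdeg, hp]
    simp [coeff_X, coeff_one, coeff_X_pow]
  set P : ℂ[X] := p.map (algebraMap ℝ ℂ) with hP
  have hPs : P.Splits := IsAlgClosed.splits P
  have hcard : P.roots.card = 5 := by
    rw [← hPs.natDegree_eq_card_roots, hP, natDegree_map, hdeg]
  obtain ⟨l, hl⟩ : ∃ l : List ℂ, (l : Multiset ℂ) = P.roots := Quot.exists_rep _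
  have hprod := hPs.eq_prod_roots
  have hreal : ∀ z ∈ l, ((z.re : ℝ) : ℂ) = z := by
    intro z hz
    have hz' : z ∈ P.roots := by rw [← hl]; exact hz
    have := hr z (by
      have h := isRoot_of_mem_roots hz'
      rwa [hP, IsRoot, eval_map_algebraMap] at h)
    exact Complex.ext (by simp) (by simp [this])
  rw [← hl] at hprod hcard
  have hlen : l.length = 5 := by simpa using hcard
  obtain ⟨a, b, c, d, e, rfl⟩ : ∃ a b c d e, l = [a, b, c, d, e] := by
    match l, hlen with
    | [a, b, c, d, e], _ => exact ⟨a, b, c, d, e, rfl⟩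
  have hPl : P.leadingCoeff = 5 := by
    rw [hP, leadingCoeff_map, hlead]; simp
  have key : ∀ y : ℝ, 1 + 21 * y + 140 * y ^ 2 + 290 * y ^ 3 + 127 * y ^ 4 + 5 * y ^ 5 =
      5 * ((y - a.re) * (y - b.re) * (y - c.re) * (y - d.re) * (y - e.re)) := by
    intro y
    have h := congrArg (eval (y : ℂ)) hprod
    rw [hPl] at h
    have e1 : eval (y : ℂ) P = ((eval y p : ℝ) : ℂ) := by
      rw [hP, eval_map_algebraMap]
      exact aeval_algebraMap_apply_eq_algebraMap_eval y p
    rw [e1] at h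
    simp only [Multiset.map_coe, List.map_cons, List.map_nil, Multiset.prod_coe, List.prod_cons,
      List.prod_nil, mul_one, eval_mul, eval_sub, eval_X, eval_C, eval_ofNat] at h
    rw [← hreal a (by simp), ← hreal b (by simp), ← hreal c (by simp), ← hreal d (by simp),
      ← hreal e (by simp)] at h
    norm_cast at h
    rw [hp] at h
    simp only [eval_add, eval_mul, eval_pow, eval_X, eval_C, eval_one] at h
    rw [h]; ring
  generalize a.re = a' at key
  generalize b.re = b' at key
  generalize c.re = c' at key
  generalize d.re = d' at key
  generalize e.re = e' at key
  clear hprod hreal hlen hl hcard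
  obtain ⟨s1, h1⟩ : ∃ s, s = -1/10 - a' := ⟨_, rfl⟩
  obtain ⟨s2, h2⟩ : ∃ s, s = -1/10 - b' := ⟨_, rfl⟩
  obtain ⟨s3, h3⟩ : ∃ s, s = -1/10 - c' := ⟨_, rfl⟩
  obtain ⟨s4, h4⟩ : ∃ s, s = -1/10 - d' := ⟨_, rfl⟩
  obtain ⟨s5, h5⟩ : ∃ s, s = -1/10 - e' := ⟨_, rfl⟩
  have key2 : ∀ y : ℝ, 1 + 21 * (y - 1/10) + 140 * (y - 1/10) ^ 2 + 290 * (y - 1/10) ^ 3 +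
      127 * (y - 1/10) ^ 4 + 5 * (y - 1/10) ^ 5 =
      5 * ((y + s1) * (y + s2) * (y + s3) * (y + s4) * (y + s5)) := by
    intro y
    rw [key (y - 1/10), h1, h2, h3, h4, h5]; ring
  have k0 := key2 0
  have k1 := key2 1
  have k2 := key2 (-1)
  have k3 := key2 2
  have k4 := key2 (-2)
  have k5 := key2 3
  clear key key2 h1 h2 h3 h4 h5
  have A : s1*s2*s3*s4*s5 = (453/100000) := by linear_combination (-1/5) * k0
  have B : s2*s3*s4*s5 + s1*s3*s4*s5 + s1*s2*s4*s5 + s1*s2*s3*s5 + s1*s2*s3*s4 = (2389/10000) := by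
    linear_combination (-1/5) * ((-1/3)*k0 + k1 - (1/2)*k2 - (1/4)*k3 + (1/20)*k4 + (1/30)*k5)
  have Cc : s1*s2*s3 + s1*s2*s4 + s1*s2*s5 + s1*s3*s4 + s1*s3*s5 + s1*s4*s5 + s2*s3*s4 +
      s2*s3*s5 + s2*s4*s5 + s3*s4*s5 = (6057/500) := by
    linear_combination (-1/5) * ((-5/4)*k0 + (2/3)*k1 + (2/3)*k2 - (1/24)*k3 - (1/24)*k4)
  have hsq : (s2*s3*s4*s5)^2 + (s1*s3*s4*s5)^2 + (s1*s2*s4*s5)^2 + (s1*s2*s3*s5)^2 +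
      (s1*s2*s3*s4)^2 = ((2389/10000))^2 - 2 * ((453/100000)) * ((6057/500)) := by
    rw [← A, ← B, ← Cc]; ring
  have : (0:ℝ) ≤ ((2389/10000))^2 - 2 * ((453/100000)) * ((6057/500)) := by rw [← hsq]; positivity
  norm_num at this

end Pi8

/-- For `π = [4, 1, 5, 6, 8, 2, 3, 7] ∈ S_8`, the excedance-generating polynomial of the
lower Bruhat interval equals `1 + 21t + 140t² + 290t³ + 127t⁴ + 5t⁵`, and it is not
real-rooted. -/
theorem bruhatExcPoly_pi8 :
    bruhatExcPoly pi8 =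
      1 + C 21 * X + C 140 * X ^ 2 + C 290 * X ^ 3 + C 127 * X ^ 4 + C 5 * X ^ 5 ∧
    ¬ RealRooted (1 + C 21 * X + C 140 * X ^ 2 + C 290 * X ^ 3 + C 127 * X ^ 4 +
        C 5 * X ^ 5) := by
  exact ⟨Pi8.poly_eq, Pi8.not_rr⟩
end

section
/- Let λ = (λ_1 ≤ … ≤ λ_n) be a weakly increasing sequence of positive integers, let m be a positive integer with m ≤ λ_1, and set λ⁺ = (m, λ_1, …, λ_n). Let α = (α_1, …, α_k) be a vector of non-negative integers, fix i with 1 ≤ i ≤ m, and let α⁺ = α + e_i (the vector α with α_i increased by 1). Then R_i(λ⁺, α⁺; t) = Σ_{j=1}^{i} R_j(λ, α; t) + t · Σ_{j=i+1}^{λ_1} R_j(λ, α; t). -/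
open Polynomial

/-- Words of length `n` over the alphabet `{1, …, k}` (encoded with `w i : Fin k`
representing the letter `(w i : ℕ) + 1`) in which the letter `c` occurs exactly `α c`
times for each `c ∈ [k]`, and whose `i`-th letter is at most `L i`. -/
def MultisetWords {n k : ℕ} (L : Fin n → ℕ) (α : Fin k → ℕ) : Finset (Fin n → Fin k) :=
  Finset.univ.filter fun w =>
    (∀ i : Fin n, (w i : ℕ) + 1 ≤ L i) ∧
    ∀ c : Fin k, (Finset.univ.filter fun i : Fin n => w i = c).card = α c

/-- The number of ascents of a word: indices `i` with `w_i < w_{i+1}`. -/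
def ascWordCount {n k : ℕ} (w : Fin n → Fin k) : ℕ :=
  (Finset.univ.filter fun i : Fin n =>
    ∃ h : (i : ℕ) + 1 < n, w i < w ⟨(i : ℕ) + 1, h⟩).card

/-- The refined multiset rook-Eulerian polynomial `R_j(λ, α; t)`: the ascent-generating
polynomial of the words of `W(λ, α)` whose first letter is `j`. -/
noncomputable def multisetRookAt {n k : ℕ} (L : Fin (n + 1) → ℕ) (α : Fin k → ℕ)
    (j : ℕ) : Polynomial ℝ :=
  ∑ w ∈ (MultisetWords L α).filter (fun w => (w 0 : ℕ) + 1 = j), X ^ ascWordCount w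

theorem ascWordCount_cons {n k : ℕ} (a : Fin k) (w : Fin (n + 1) → Fin k) :
    ascWordCount (Fin.cons a w : Fin (n + 2) → Fin k) =
      (if a < w 0 then 1 else 0) + ascWordCount w := by
  unfold ascWordCount
  simp only [Finset.card_filter]
  rw [Fin.sum_univ_succ]
  congr 1
  · have h1 : (⟨((0 : Fin (n + 2)) : ℕ) + 1, by simp⟩ : Fin (n + 2)) = Fin.succ 0 := by
      ext; simp
    have : (∃ h : ((0 : Fin (n + 2)) : ℕ) + 1 < n + 2, (Fin.cons a w : Fin (n + 2) → Fin k) 0 <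
        (Fin.cons a w : Fin (n + 2) → Fin k) ⟨((0 : Fin (n + 2)) : ℕ) + 1, h⟩) ↔ a < w 0 := by
      constructor
      · rintro ⟨h, h'⟩
        rw [h1] at h'
        simpa using h'
      · intro h
        refine ⟨by simp, ?_⟩
        rw [h1]
        simpa using h
    simp only [this]
  · refine Finset.sum_congr rfl fun j _ => ?_
    have : (∃ h : (j.succ : ℕ) + 1 < n + 2, (Fin.cons a w : Fin (n + 2) → Fin k) j.succ <
        (Fin.cons a w : Fin (n + 2) → Fin k) ⟨(j.succ : ℕ) + 1, h⟩) ↔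
        ∃ h : (j : ℕ) + 1 < n + 1, w j < w ⟨(j : ℕ) + 1, h⟩ := by
      constructor
      · rintro ⟨h, h'⟩
        have h2 : (j : ℕ) + 1 < n + 1 := by simpa using h
        refine ⟨h2, ?_⟩
        have h1 : (⟨(j.succ : ℕ) + 1, h⟩ : Fin (n + 2)) = Fin.succ ⟨(j : ℕ) + 1, h2⟩ := by
          ext; simp
        rw [h1] at h'
        simpa only [Fin.cons_succ] using h'
      · rintro ⟨h2, h'⟩
        have h : (j.succ : ℕ) + 1 < n + 2 := by simpa using h2
        refine ⟨h, ?_⟩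
        have h1 : (⟨(j.succ : ℕ) + 1, h⟩ : Fin (n + 2)) = Fin.succ ⟨(j : ℕ) + 1, h2⟩ := by
          ext; simp
        rw [h1]
        simpa only [Fin.cons_succ] using h'
    simp only [this]

theorem cons_mem_words {n k : ℕ} (L : Fin (n + 1) → ℕ) (m : ℕ) (α : Fin k → ℕ)
    (a : Fin k) (ham : (a : ℕ) + 1 ≤ m) (w : Fin (n + 1) → Fin k) :
    (Fin.cons a w : Fin (n + 2) → Fin k) ∈
      MultisetWords (Fin.cases m (fun j => L j) : Fin (n + 2) → ℕ)
        (fun c => if (c : ℕ) + 1 = (a : ℕ) + 1 then α c + 1 else α c) ↔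
      w ∈ MultisetWords L α := by
  unfold MultisetWords
  simp only [Finset.mem_filter, Finset.mem_univ, true_and, Finset.card_filter]
  refine and_congr ?_ ?_
  · rw [Fin.forall_fin_succ]
    simp [ham]
  · refine forall_congr' fun c => ?_
    rw [Fin.sum_univ_succ]
    simp only [Fin.cons_zero, Fin.cons_succ]
    by_cases h : a = c
    · subst h
      simp only [if_true]
      omega
    · have : ¬ ((c : ℕ) + 1 = (a : ℕ) + 1) := fun h' => h (Fin.ext (by omega))
      rw [if_neg h, if_neg this, zero_add]

theorem sum_multisetRookAt {n k : ℕ} (L : Fin (n + 1) → ℕ) (α : Fin k → ℕ)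
    (s : Finset ℕ) :
    ∑ j ∈ s, multisetRookAt L α j =
      ∑ w ∈ MultisetWords L α, if (w 0 : ℕ) + 1 ∈ s then X ^ ascWordCount w else 0 := by
  unfold multisetRookAt
  simp only [Finset.sum_filter]
  rw [Finset.sum_comm]
  refine Finset.sum_congr rfl fun w _ => ?_
  rw [Finset.sum_ite_eq]

theorem multisetRookAt_recursion (n k : ℕ) (L : Fin (n + 1) → ℕ) (hmono : Monotone L)
    (hpos : ∀ i, 0 < L i) (m : ℕ) (hm : 0 < m) (hm' : m ≤ L 0)
    (α : Fin k → ℕ) (i : ℕ) (hi : 1 ≤ i) (him : i ≤ m) (hik : i ≤ k) :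
    multisetRookAt (Fin.cases m (fun j => L j) : Fin (n + 2) → ℕ)
        (fun c => if (c : ℕ) + 1 = i then α c + 1 else α c) i =
      (∑ j ∈ Finset.Icc 1 i, multisetRookAt L α j)
        + X * ∑ j ∈ Finset.Icc (i + 1) (L 0), multisetRookAt L α j := by
  obtain ⟨a, rfl⟩ : ∃ a : Fin k, i = (a : ℕ) + 1 := ⟨⟨i - 1, by omega⟩, by simp; omega⟩
  rw [sum_multisetRookAt, sum_multisetRookAt, Finset.mul_sum, ← Finset.sum_add_distrib]
  unfold multisetRookAt
  symm
  refine Finset.sum_bij (fun w _ => (Fin.cons a w : Fin (n + 2) → Fin k)) ?_ ?_ ?_ ?_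
  · intro w hw
    rw [Finset.mem_filter]
    exact ⟨(cons_mem_words L m α a him w).2 hw, by simp⟩
  · intro w _ v _ h
    exact (Fin.cons_injective2 h).2
  · intro v hv
    rw [Finset.mem_filter] at hv
    have h0 : v 0 = a := Fin.ext (by omega)
    have hv' : (Fin.cons a (Fin.tail v) : Fin (n + 2) → Fin k) = v := by
      rw [← h0, Fin.cons_self_tail]
    refine ⟨Fin.tail v, ?_, hv'⟩
    rw [← cons_mem_words L m α a him, hv']
    exact hv.1
  · intro w hw
    have hw0 : (w 0 : ℕ) + 1 ≤ L 0 := by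
      unfold MultisetWords at hw
      exact (Finset.mem_filter.1 hw).2.1 0
    rw [ascWordCount_cons]
    simp only [Finset.mem_Icc]
    by_cases h : a < w 0
    · have h' : (a : ℕ) < (w 0 : ℕ) := h
      rw [if_neg (by omega), if_pos (by omega), if_pos h, pow_add, pow_one, zero_add]
    · have h' : ¬ (a : ℕ) < (w 0 : ℕ) := h
      rw [if_pos (by omega), if_neg (by omega), if_neg h, zero_add, mul_zero, add_zero]
end
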